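/- Let n ≥ 3 be an odd integer. There is no finite group G of order 18n containing elements x and y such that x has order 2, y has order 6, and the product x·y has order 9n. -/

import Mathlib

/-!
Put `c = x * y`. The subgroup `⟨c⟩` has index `2`, hence is normal, so `x c x⁻¹ = c ^ k` for some
integer `k`, and `k ^ 2 ≡ 1` modulo `9n` because `x` is an involution. Since `y = x * c`, it follows
that `y ^ 2 = c ^ (k + 1)`, and `y ^ 6 = 1` forces `k + 1 = 3nt` for some `t`. Then `9n` divides
`(k + 1) (k - 1) = 3nt (3nt - 2)`, so `3 ∣ t`, i.e. `9n ∣ k + 1` and `y ^ 2 = 1`, contradicting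
`orderOf y = 6`.
-/

/-- For `n ≥ 3` odd, there is no finite group of order `18n` containing an element
`x` of order 2 and an element `y` of order 6 with `x * y` of order `9n`. -/
theorem no_group_order_18n (n : ℕ) (hn : 3 ≤ n) (hodd : Odd n) :
    ¬ ∃ (G : Type) (_ : Group G) (_ : Finite G),
      Nat.card G = 18 * n ∧
      ∃ x y : G, orderOf x = 2 ∧ orderOf y = 6 ∧ orderOf (x * y) = 9 * n := by
  rintro ⟨G, _, _, hG, x, y, hx, hy, hxy⟩
  obtain ⟨c, hc⟩ : ∃ c, c = x * y := ⟨_, rfl⟩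
  rw [← hc] at hxy
  have hx2 : x * x = 1 := by rw [← pow_two, ← hx, pow_orderOf_eq_one]
  have hxi : x⁻¹ = x := inv_eq_of_mul_eq_one_left hx2
  have hyc : y = x * c := by rw [hc, ← mul_assoc, hx2, one_mul]
  have hind : (Subgroup.zpowers c).index = 2 := by
    have h := (Subgroup.zpowers c).card_mul_index
    rw [Nat.card_zpowers, hxy, hG, show 18 * n = 9 * n * 2 by ring] at h
    exact Nat.eq_of_mul_eq_mul_left (by omega) h
  have hnormal := Subgroup.normal_of_index_eq_two hind
  obtain ⟨k, hk⟩ := Subgroup.mem_zpowers_iff.1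
    (hnormal.conj_mem c (Subgroup.mem_zpowers c) x)
  have hkk : c ^ (k * k - 1) = 1 := by
    have h : c ^ (k * k) = c := by
      rw [zpow_mul, hk, conj_zpow, hk, hxi]
      simp only [mul_assoc, hx2, mul_one]
      rw [← mul_assoc, hx2, one_mul]
    rw [zpow_sub, h, zpow_one, mul_inv_cancel]
  have hy2 : y ^ 2 = c ^ (k + 1) := by
    rw [zpow_add, hk, zpow_one, hxi, hyc, pow_two]
    simp only [mul_assoc]
  have hy6 : c ^ ((k + 1) * 3) = 1 := by
    rw [zpow_mul, ← hy2]
    norm_cast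
    rw [← pow_mul, show 2 * 3 = orderOf y from hy.symm, pow_orderOf_eq_one]
  have h1 := orderOf_dvd_iff_zpow_eq_one.2 hkk
  have h2 := orderOf_dvd_iff_zpow_eq_one.2 hy6
  rw [hxy] at h1 h2
  push_cast at h1 h2
  have hn0 : (n : ℤ) ≠ 0 := by omega
  obtain ⟨t, ht⟩ := h2
  obtain ⟨s, hs⟩ := h1
  have hk1 : k = 3 * n * t - 1 := by linarith
  have h3 : t * (3 * n * t - 2) = 3 * s := by
    apply mul_left_cancel₀ (mul_ne_zero (three_ne_zero) hn0)
    rw [hk1] at hs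
    linarith
  have ht3 : (3 : ℤ) ∣ t := by
    have : 2 * t = 3 * (n * t * t - s) := by linarith
    omega
  obtain ⟨u, rfl⟩ := ht3
  have hy1 : y ^ 2 = 1 := by
    rw [hy2, ← orderOf_dvd_iff_zpow_eq_one, hxy]
    exact ⟨u, by rw [hk1]; push_cast; ring⟩
  have := orderOf_dvd_of_pow_eq_one hy1
  rw [hy] at this
  omega
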